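/- arXiv:2004.00500 — 3 statements merged into one kernel-verified Lean document; each statement's English description precedes it below -/
import Mathlib

section
/- Let f : ℝ^d → ℝ be Lipschitz continuous and δ > 0. Define the smoothed function f̂(w) = E_{v ∼ μ_B}[f(w + δ v)]. Then f̂ is differentiable at every w ∈ ℝ^d and its gradient satisfies ∇f̂(w) = (d/δ) · E_{u ∼ μ_S}[f(w + δ u) u]. -/
open MeasureTheory Metric RealInnerProductSpace

/-- The uniform probability measure on the closed unit ball of `ℝ^d`
(normalized restricted Lebesgue measure). -/
noncomputable def ballUniform (d : ℕ) : Measure (EuclideanSpace ℝ (Fin d)) :=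
  ((volume : Measure (EuclideanSpace ℝ (Fin d))) (closedBall 0 1))⁻¹ •
    (volume : Measure (EuclideanSpace ℝ (Fin d))).restrict (closedBall 0 1)

/-- The uniform probability measure on the unit sphere of `ℝ^d`
(the normalized rotation-invariant surface measure), viewed as a measure on the
ambient space. -/
noncomputable def sphereUniform (d : ℕ) : Measure (EuclideanSpace ℝ (Fin d)) :=
  ((volume : Measure (EuclideanSpace ℝ (Fin d))).toSphere Set.univ)⁻¹ •
    Measure.map Subtype.val (volume : Measure (EuclideanSpace ℝ (Fin d))).toSphere

section Aux

open MeasureTheory Metric RealInnerProductSpace Set Filter Topology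

variable {E : Type*} [NormedAddCommGroup E] [InnerProductSpace ℝ E] [FiniteDimensional ℝ E]
  [MeasurableSpace E] [BorelSpace E] [Nontrivial E] (μ : Measure E) [μ.IsAddHaarMeasure]

lemma aux_polar (k : E → ℝ) (hk : Integrable k μ) :
    ∫ x, k x ∂μ = ∫ r in Ioi (0 : ℝ), r ^ (Module.finrank ℝ E - 1) *
      ∫ u : sphere (0 : E) 1, k (r • (u : E)) ∂μ.toSphere := by
  have hmp := μ.measurePreserving_homeomorphUnitSphereProd
  let K : (sphere (0 : E) 1) × Ioi (0 : ℝ) → ℝ := fun p => k ((p.2 : ℝ) • (p.1 : E))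
  have hK : ∀ x : ({(0)}ᶜ : Set E), K (homeomorphUnitSphereProd E x) = k x := by
    intro x
    have h1 : ((homeomorphUnitSphereProd E).symm (homeomorphUnitSphereProd E x)) = x := by simp
    have h2 := congrArg Subtype.val h1
    rw [homeomorphUnitSphereProd_symm_apply_coe] at h2
    simp only [K]
    rw [h2]
  have hint : Integrable K (μ.toSphere.prod (.volumeIoiPow (Module.finrank ℝ E - 1))) := by
    rw [← hmp.integrable_comp_emb (Homeomorph.measurableEmbedding _)]
    have : K ∘ (homeomorphUnitSphereProd E) = k ∘ Subtype.val := funext hK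
    rw [this, ← integrableOn_iff_comap_subtypeVal (measurableSet_singleton _).compl]
    exact hk.integrableOn
  calc
    ∫ x, k x ∂μ = ∫ x : ({(0)}ᶜ : Set E), k x.1 ∂(μ.comap (↑)) := by
      rw [integral_subtype_comap (measurableSet_singleton _).compl k,
        restrict_compl_singleton]
    _ = ∫ x, K x ∂μ.toSphere.prod (.volumeIoiPow (Module.finrank ℝ E - 1)) := by
      rw [← hmp.integral_comp (Homeomorph.measurableEmbedding _) K]
      simp_rw [hK]
    _ = ∫ r : Ioi (0 : ℝ), ∫ u : sphere (0 : E) 1, k ((r : ℝ) • (u : E)) ∂μ.toSphere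
          ∂(.volumeIoiPow (Module.finrank ℝ E - 1)) := by
      rw [integral_prod_symm _ hint]
    _ = _ := by
      simp only [Measure.volumeIoiPow, ENNReal.ofReal]
      rw [integral_withDensity_eq_integral_smul,
        integral_subtype_comap measurableSet_Ioi
          fun a ↦ Real.toNNReal (a ^ (Module.finrank ℝ E - 1)) •
            ∫ u : sphere (0 : E) 1, k (a • (u : E)) ∂μ.toSphere,
        setIntegral_congr_fun measurableSet_Ioi fun x hx ↦ ?_]
      · simp only [NNReal.smul_def, Real.coe_toNNReal _ (pow_nonneg (mem_Ioi.1 hx).le _), smul_eq_mul]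
      · exact (measurable_subtype_coe.pow_const _).real_toNNReal

lemma aux_lineDeriv (R : ℝ) (h x : E) (hx : x ≠ 0) (hxR : ‖x‖ ≠ R) :
    lineDeriv ℝ (fun v : E => max 0 (R - ‖v‖)) x (-h) =
      (ball (0 : E) R).indicator (fun v => ⟪v, h⟫ / ‖v‖) x := by
  rcases lt_or_gt_of_ne hxR with hlt | hgt
  · rw [indicator_of_mem (by simpa using hlt)]
    have hn : HasFDerivAt (fun v : E => ‖v‖) (‖x‖⁻¹ • innerSL ℝ x) x := by
      have h1 := (hasStrictFDerivAt_norm_sq x).hasFDerivAt.sqrt (by positivity)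
      simp only [Real.sqrt_sq (norm_nonneg _)] at h1
      convert h1 using 1
      ext y
      simp
      field_simp
    have h2 : HasFDerivAt (fun v : E => R - ‖v‖) (-(‖x‖⁻¹ • innerSL ℝ x)) x := hn.const_sub R
    have h3 : (fun v : E => max 0 (R - ‖v‖)) =ᶠ[𝓝 x] fun v => R - ‖v‖ := by
      have : ∀ᶠ v in 𝓝 x, ‖v‖ < R := continuous_norm.continuousAt.eventually_lt_const hlt
      filter_upwards [this] with v hv
      exact max_eq_right (by linarith)
    have h4 := h2.congr_of_eventuallyEq h3
    rw [(h4.hasLineDerivAt (-h)).lineDeriv]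
    simp
    ring
  · rw [indicator_of_notMem (by simpa using hgt.le)]
    have h3 : (fun v : E => max 0 (R - ‖v‖)) =ᶠ[𝓝 x] fun v => 0 := by
      have : ∀ᶠ v in 𝓝 x, R < ‖v‖ := continuous_norm.continuousAt.eventually_const_lt hgt
      filter_upwards [this] with v hv
      exact max_eq_left (by linarith)
    have h4 := (hasFDerivAt_const (𝕜 := ℝ) (0 : ℝ) x).congr_of_eventuallyEq h3
    rw [(h4.hasLineDerivAt (-h)).lineDeriv]
    simp

/-- surface integral as a function of the radius -/
lemma aux_S_cont (g : E → ℝ) (hg : Continuous g) (h : E) :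
    Continuous fun r : ℝ => r ^ (Module.finrank ℝ E - 1) *
      ∫ u : sphere (0 : E) 1, g (r • (u : E)) * ⟪(u : E), h⟫ ∂μ.toSphere := by
  refine (continuous_pow _).mul ?_
  have : CompactSpace (sphere (0 : E) 1) := isCompact_iff_compactSpace.1 (isCompact_sphere _ _)
  have := continuous_parametric_integral_of_continuous (μ := μ.toSphere)
    (f := fun (r : ℝ) (u : sphere (0 : E) 1) => g (r • (u : E)) * ⟪(u : E), h⟫)
    (s := univ) (by fun_prop) isCompact_univ
  simpa using this

lemma aux_lip (R : ℝ) : LipschitzWith 1 (fun v : E => max 0 (R - ‖v‖)) := by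
  apply LipschitzWith.const_max
  refine LipschitzWith.of_dist_le_mul fun x y => ?_
  have := abs_norm_sub_norm_le y x
  rw [Real.dist_eq, dist_eq_norm, norm_sub_rev x y]
  simpa using this

lemma aux_supp (R : ℝ) : HasCompactSupport (fun v : E => max 0 (R - ‖v‖)) := by
  refine HasCompactSupport.intro (isCompact_closedBall (0 : E) R) fun x hx => ?_
  simp at hx
  exact max_eq_left (by linarith)

lemma aux_K (g : E → ℝ) {C : NNReal} (hg : LipschitzWith C g) (h : E) (R : ℝ) (hR : 0 < R) :
    ∫ x, lineDeriv ℝ g x h * max 0 (R - ‖x‖) ∂μ =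
      ∫ r in (0 : ℝ)..R, r ^ (Module.finrank ℝ E - 1) *
        ∫ u : sphere (0 : E) 1, g (r • (u : E)) * ⟪(u : E), h⟫ ∂μ.toSphere := by
  rw [hg.integral_lineDeriv_mul_eq (aux_lip R) (aux_supp R) h]
  have hgc := hg.continuous
  have hae : (fun x => lineDeriv ℝ (fun v : E => max 0 (R - ‖v‖)) x (-h) * g x) =ᵐ[μ]
      (ball (0 : E) R).indicator (fun v => ⟪v, h⟫ / ‖v‖ * g v) := by
    have h1 : ∀ᵐ x ∂μ, x ≠ 0 := by
      simp [ae_iff]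
    have h2 : ∀ᵐ x ∂μ, ‖x‖ ≠ R := by
      have := Measure.addHaar_sphere μ (0 : E) R
      rw [ae_iff]
      convert this using 2
      ext; simp
    filter_upwards [h1, h2] with x hx hxR
    rw [aux_lineDeriv R h x hx hxR]
    by_cases hxb : x ∈ ball (0 : E) R
    · simp only [indicator_of_mem hxb]
    · simp only [indicator_of_notMem hxb, zero_mul]
  rw [integral_congr_ae hae]
  have hint : Integrable ((ball (0 : E) R).indicator (fun v => ⟪v, h⟫ / ‖v‖ * g v)) μ := by
    rw [integrable_indicator_iff measurableSet_ball]
    obtain ⟨B, hB⟩ := (isCompact_closedBall (0 : E) R).exists_bound_of_continuousOn hgc.continuousOn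
    refine Measure.integrableOn_of_bounded (M := ‖h‖ * B) measure_ball_lt_top.ne ?_ ?_
    · have : Measurable (fun v : E => ⟪v, h⟫ / ‖v‖ * g v) := by
        have := hgc.measurable
        fun_prop
      exact this.aestronglyMeasurable
    · filter_upwards [ae_restrict_mem measurableSet_ball] with x hx
      rw [norm_mul]
      refine mul_le_mul ?_ (hB x (ball_subset_closedBall hx)) (norm_nonneg _) (norm_nonneg _)
      rw [norm_div, norm_norm]
      refine div_le_of_le_mul₀ (norm_nonneg _) (norm_nonneg _) ?_
      rw [mul_comm]
      exact norm_inner_le_norm x h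
  rw [aux_polar μ _ hint, intervalIntegral.integral_of_le hR.le, integral_Ioc_eq_integral_Ioo]
  rw [← integral_indicator measurableSet_Ioi, ← integral_indicator measurableSet_Ioo]
  congr 1
  ext r
  by_cases hr : 0 < r
  · by_cases hrR : r < R
    · rw [indicator_of_mem (mem_Ioi.2 hr), indicator_of_mem (mem_Ioo.2 ⟨hr, hrR⟩)]
      congr 2
      ext u
      have hu : ‖(u : E)‖ = 1 := by simpa using u.2
      have hru : ‖r • (u : E)‖ = r := by rw [norm_smul, hu, mul_one, Real.norm_of_nonneg hr.le]
      rw [indicator_of_mem (by simpa [hru] using hrR), hru, inner_smul_left]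
      simp
      field_simp
    · rw [indicator_of_mem (mem_Ioi.2 hr), indicator_of_notMem (by simp [hrR])]
      have : ∀ u : sphere (0 : E) 1,
          (ball (0 : E) R).indicator (fun v => ⟪v, h⟫ / ‖v‖ * g v) (r • (u : E)) = 0 := by
        intro u
        have hu : ‖(u : E)‖ = 1 := by simpa using u.2
        have hru : ‖r • (u : E)‖ = r := by rw [norm_smul, hu, mul_one, Real.norm_of_nonneg hr.le]
        rw [indicator_of_notMem]
        rw [mem_ball_zero_iff, hru]
        exact hrR
      simp [this]
  · rw [indicator_of_notMem (by simpa using hr), indicator_of_notMem (by simp [hr])]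

lemma aux_K_deriv (g : E → ℝ) {C : NNReal} (hg : LipschitzWith C g) (h : E) :
    HasDerivAt (fun R : ℝ => ∫ x, lineDeriv ℝ g x h * max 0 (R - ‖x‖) ∂μ)
      (∫ x in closedBall (0 : E) 1, lineDeriv ℝ g x h ∂μ) 1 := by
  rw [← integral_indicator measurableSet_closedBall]
  have hm : AEStronglyMeasurable (fun x => lineDeriv ℝ g x h) μ :=
    aestronglyMeasurable_lineDeriv hg.continuous μ
  have hbd : ∀ x, ‖lineDeriv ℝ g x h‖ ≤ C * ‖h‖ := fun x => norm_lineDeriv_le_of_lipschitz ℝ hg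
  refine (hasDerivAt_integral_of_dominated_loc_of_lip (s := ball (1 : ℝ) 1)
    (bound := (closedBall (0 : E) 2).indicator fun _ => C * ‖h‖) (ball_mem_nhds _ one_pos)
    ?_ ?_ ?_ ?_ ?_ ?_).2
  · refine Eventually.of_forall fun R => ?_
    exact hm.mul (aux_lip R).continuous.aestronglyMeasurable
  · exact ((aux_lip (1:ℝ)).continuous.integrable_of_hasCompactSupport (aux_supp 1)).bdd_mul hm
      (Eventually.of_forall hbd)
  · exact hm.indicator measurableSet_closedBall
  · refine Eventually.of_forall fun x => ?_
    refine LipschitzOnWith.of_dist_le_mul fun a ha b hb => ?_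
    simp only [Real.ball_eq_Ioo, mem_Ioo] at ha hb
    rw [Real.dist_eq, ← mul_sub, abs_mul]
    by_cases hx : x ∈ closedBall (0 : E) 2
    · rw [indicator_of_mem hx]
      refine mul_le_mul ?_ ?_ (abs_nonneg _) (NNReal.coe_nonneg _)
      · rw [Real.coe_nnabs]
        exact (hbd x).trans (le_abs_self _)
      · rw [max_comm 0 _, max_comm 0 _]
        refine (abs_max_sub_max_le_abs _ _ _).trans ?_
        rw [Real.dist_eq]
        simp
    · simp at hx
      rw [max_eq_left (by linarith), max_eq_left (by linarith)]
      simp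
      positivity
  · rw [integrable_indicator_iff measurableSet_closedBall]
    exact integrableOn_const measure_closedBall_lt_top.ne
  · have h2 : ∀ᵐ x ∂μ, ‖x‖ ≠ 1 := by
      have := Measure.addHaar_sphere μ (0 : E) 1
      rw [ae_iff]
      convert this using 2
      ext; simp
    filter_upwards [h2] with x hx
    rcases lt_or_gt_of_ne hx with hlt | hgt
    · rw [indicator_of_mem (by simpa using hlt.le)]
      have h3 : (fun R : ℝ => lineDeriv ℝ g x h * max 0 (R - ‖x‖)) =ᶠ[𝓝 1]
          fun R => lineDeriv ℝ g x h * (R - ‖x‖) := by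
        filter_upwards [lt_mem_nhds hlt] with R hR
        rw [max_eq_right (by linarith)]
      refine HasDerivAt.congr_of_eventuallyEq ?_ h3
      simpa using ((hasDerivAt_id (1:ℝ)).sub_const ‖x‖).const_mul (lineDeriv ℝ g x h)
    · rw [indicator_of_notMem (by simpa using hgt)]
      have h3 : (fun R : ℝ => lineDeriv ℝ g x h * max 0 (R - ‖x‖)) =ᶠ[𝓝 1]
          fun R => 0 := by
        filter_upwards [gt_mem_nhds hgt] with R hR
        rw [max_eq_left (by linarith), mul_zero]
      exact (hasDerivAt_const (1:ℝ) (0:ℝ)).congr_of_eventuallyEq h3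

lemma aux_div (g : E → ℝ) {C : NNReal} (hg : LipschitzWith C g) (h : E) :
    ∫ x in closedBall (0 : E) 1, lineDeriv ℝ g x h ∂μ =
      ∫ u : sphere (0 : E) 1, g u * ⟪(u : E), h⟫ ∂μ.toSphere := by
  have hS := aux_S_cont μ g hg.continuous h
  have h1 := intervalIntegral.integral_hasDerivAt_right (hS.intervalIntegrable 0 1)
    hS.stronglyMeasurable.stronglyMeasurableAtFilter hS.continuousAt
  have h2 := (aux_K_deriv μ g hg h).congr_of_eventuallyEq (f₁ := fun R => ∫ r in (0 : ℝ)..R,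
      r ^ (Module.finrank ℝ E - 1) *
        ∫ u : sphere (0 : E) 1, g (r • (u : E)) * ⟪(u : E), h⟫ ∂μ.toSphere) (by
    filter_upwards [lt_mem_nhds (zero_lt_one (α := ℝ))] with R hR
    rw [aux_K μ g hg h R hR])
  simpa using h2.unique h1

lemma aux_main (g : E → ℝ) {C : NNReal} (hg : LipschitzWith C g) :
    HasGradientAt (fun x => ∫ v in closedBall (0 : E) 1, g (x + v) ∂μ)
      (∫ u : sphere (0 : E) 1, g u • (u : E) ∂μ.toSphere) 0 := by
  have : IsFiniteMeasure (μ.restrict (closedBall (0 : E) 1)) :=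
    ⟨by simpa using measure_closedBall_lt_top⟩
  have hgc := hg.continuous
  have hd : ∀ᵐ v ∂(μ.restrict (closedBall (0 : E) 1)), DifferentiableAt ℝ g v :=
    ae_restrict_of_ae hg.ae_differentiableAt
  have key := hasFDerivAt_integral_of_dominated_loc_of_lip (𝕜 := ℝ)
    (μ := μ.restrict (closedBall (0 : E) 1))
    (F := fun x v => g (x + v)) (F' := fun v => fderiv ℝ g v) (x₀ := (0 : E)) (s := univ)
    (bound := fun _ => (C : ℝ)) univ_mem
    (Eventually.of_forall fun x => (by fun_prop : Continuous fun v => g (x + v)).aestronglyMeasurable)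
    (by simpa [IntegrableOn] using hgc.continuousOn.integrableOn_compact (μ := μ) (isCompact_closedBall (0 : E) 1))
    (measurable_fderiv ℝ g).aestronglyMeasurable
    (Eventually.of_forall fun v => by
      refine LipschitzOnWith.of_dist_le_mul fun a _ b _ => ?_
      simpa using hg.dist_le_mul (a + v) (b + v))
    (integrable_const _)
    (by
      filter_upwards [hd] with v hv
      have : HasFDerivAt g (fderiv ℝ g v) (0 + v) := by simpa using hv.hasFDerivAt
      simpa [Function.comp_def] using this.comp (0 : E) ((hasFDerivAt_id (𝕜 := ℝ) (0 : E)).add_const v))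
  rw [hasGradientAt_iff_hasFDerivAt]
  suffices hL : (InnerProductSpace.toDual ℝ E) (∫ u : sphere (0 : E) 1, g u • (u : E) ∂μ.toSphere) =
      ∫ v in closedBall (0 : E) 1, fderiv ℝ g v ∂μ by
    rw [hL]
    exact key.2
  ext h
  rw [ContinuousLinearMap.integral_apply key.1, InnerProductSpace.toDual_apply_apply,
    real_inner_comm]
  have : CompactSpace (sphere (0 : E) 1) := isCompact_iff_compactSpace.1 (isCompact_sphere _ _)
  have hi : Integrable (fun u : sphere (0 : E) 1 => g u • (u : E)) μ.toSphere :=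
    (by fun_prop : Continuous fun u : sphere (0 : E) 1 => g u • (u : E)).integrable_of_hasCompactSupport
      (HasCompactSupport.of_compactSpace _)
  rw [← integral_inner hi]
  have h3 : ∫ v in closedBall (0 : E) 1, fderiv ℝ g v h ∂μ =
      ∫ v in closedBall (0 : E) 1, lineDeriv ℝ g v h ∂μ := by
    refine integral_congr_ae ?_
    filter_upwards [hd] with v hv
    rw [hv.lineDeriv_eq_fderiv]
  rw [h3, aux_div μ g hg h]
  congr 1
  ext u
  rw [inner_smul_right, real_inner_comm]

end Aux

theorem gradient_of_ball_smoothed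
    (d : ℕ) (hd : 1 ≤ d)
    (f : EuclideanSpace ℝ (Fin d) → ℝ) (hf : ∃ K : NNReal, LipschitzWith K f)
    (δ : ℝ) (hδ : 0 < δ)
    (fhat : EuclideanSpace ℝ (Fin d) → ℝ)
    (hfhat : ∀ w, fhat w = ∫ v, f (w + δ • v) ∂(ballUniform d)) :
    ∀ w : EuclideanSpace ℝ (Fin d),
      HasGradientAt fhat
        (((d : ℝ) / δ) • ∫ u, f (w + δ • u) • u ∂(sphereUniform d)) w := by
  intro w
  obtain ⟨K, hK⟩ := hf
  have : Nonempty (Fin d) := ⟨⟨0, hd⟩⟩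
  have : Nontrivial (EuclideanSpace ℝ (Fin d)) := inferInstance
  have hg : LipschitzWith (K * ‖δ‖₊) (fun v : EuclideanSpace ℝ (Fin d) => f (w + δ • v)) := by
    refine hK.comp ?_
    refine LipschitzWith.of_dist_le_mul fun a b => ?_
    rw [dist_add_left, dist_smul₀]
    simp
  have hm := aux_main (volume : Measure (EuclideanSpace ℝ (Fin d))) _ hg
  rw [hasGradientAt_iff_hasFDerivAt] at hm ⊢
  set V : ℝ := (volume (closedBall (0 : EuclideanSpace ℝ (Fin d)) 1)).toReal with hV
  have hVpos : 0 < V := ENNReal.toReal_pos (measure_closedBall_pos _ _ one_pos).ne'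
    measure_closedBall_lt_top.ne
  have hfe : fhat = fun w' => V⁻¹ * (fun x : EuclideanSpace ℝ (Fin d) =>
      ∫ v in closedBall (0 : EuclideanSpace ℝ (Fin d)) 1, f (w + δ • (x + v)))
        (δ⁻¹ • (w' - w)) := by
    ext w'
    rw [hfhat, ballUniform, integral_smul_measure, ENNReal.toReal_inv, smul_eq_mul]
    congr 2
    ext v
    rw [smul_add, smul_smul, mul_inv_cancel₀ hδ.ne', one_smul]
    congr 1
    abel
  have hsph : ∫ u, f (w + δ • u) • u ∂(sphereUniform d) = ((d : ℝ) * V)⁻¹ •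
      ∫ u : sphere (0 : EuclideanSpace ℝ (Fin d)) 1, f (w + δ • (u : EuclideanSpace ℝ (Fin d))) •
        (u : EuclideanSpace ℝ (Fin d)) ∂(volume : Measure (EuclideanSpace ℝ (Fin d))).toSphere := by
    rw [sphereUniform, integral_smul_measure,
      (MeasurableEmbedding.subtype_coe (isClosed_sphere.measurableSet)).integral_map,
      Measure.toSphere_apply_univ, ← Measure.addHaar_closedBall_eq_addHaar_ball]
    simp [hV, ENNReal.toReal_inv, ENNReal.toReal_mul]
  have hin : HasFDerivAt (fun w' : EuclideanSpace ℝ (Fin d) => δ⁻¹ • (w' - w))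
      (δ⁻¹ • ContinuousLinearMap.id ℝ (EuclideanSpace ℝ (Fin d))) w :=
    ((hasFDerivAt_id w).sub_const w).const_smul δ⁻¹
  have hm' : HasFDerivAt (fun x : EuclideanSpace ℝ (Fin d) =>
      ∫ v in closedBall (0 : EuclideanSpace ℝ (Fin d)) 1, f (w + δ • (x + v)))
      ((InnerProductSpace.toDual ℝ (EuclideanSpace ℝ (Fin d)))
        (∫ u : sphere (0 : EuclideanSpace ℝ (Fin d)) 1,
          f (w + δ • (u : EuclideanSpace ℝ (Fin d))) • (u : EuclideanSpace ℝ (Fin d))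
          ∂(volume : Measure (EuclideanSpace ℝ (Fin d))).toSphere)) (δ⁻¹ • (w - w)) := by
    rw [sub_self, smul_zero]
    exact hm
  have hfin := (hm'.comp w hin).const_mul V⁻¹
  rw [hfe, hsph]
  refine hfin.congr_fderiv (Eq.symm ?_)
  have hd0 : (d : ℝ) ≠ 0 := by positivity
  ext h
  simp [inner_smul_left]
  field_simp
end

section
/- Projected online gradient descent with unbiased bounded stochastic gradients: let 𝕎 ⊆ ℝ^d be a nonempty compact convex set with ‖w‖ ≤ W for all w ∈ 𝕎 (W > 0), let f_1,…,f_T : ℝ^d → ℝ be convex differentiable functions, and let G > 0. On a probability space, let w_1 ∈ 𝕎 be deterministic, let g_1,…,g_T be random vectors with ‖g_t‖ ≤ G almost surely and E[g_t | g_1,…,g_{t−1}] = ∇f_t(w_t) almost surely for each t, and set w_{t+1} = proj_𝕎(w_t − η g_t) with fixed step size η = 2W/(G√T). Then for every w* ∈ 𝕎, E[Σ_{t=1}^T f_t(w_t)] − Σ_{t=1}^T f_t(w*) ≤ 2 W G √T. -/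
open MeasureTheory Metric Finset

theorem grad_ineq_aux {d : ℕ} (f : EuclideanSpace ℝ (Fin d) → ℝ)
    (hc : ConvexOn ℝ Set.univ f) (hd : Differentiable ℝ f) (x y : EuclideanSpace ℝ (Fin d)) :
    f x - f y ≤ inner ℝ (x - y) (gradient f x) := by
  have h1 : ConvexOn ℝ Set.univ (f ∘ (AffineMap.lineMap x y : ℝ →ᵃ[ℝ] _)) := by
    simpa using hc.comp_affineMap (AffineMap.lineMap x y : ℝ →ᵃ[ℝ] _)
  have h2 : HasDerivAt (f ∘ (AffineMap.lineMap x y : ℝ →ᵃ[ℝ] _))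
      (inner ℝ (gradient f x) (y - x)) 0 := by
    have hl : HasDerivAt (AffineMap.lineMap x y : ℝ →ᵃ[ℝ] _) (y - x) (0:ℝ) :=
      AffineMap.hasDerivAt_lineMap
    have hg : HasFDerivAt f (InnerProductSpace.toDual ℝ _ (gradient f x))
        ((AffineMap.lineMap x y : ℝ →ᵃ[ℝ] _) (0:ℝ)) := by
      rw [AffineMap.lineMap_apply_zero]
      exact (hd x).hasGradientAt.hasFDerivAt
    have := hg.comp_hasDerivAt (0:ℝ) hl
    simpa using this
  have h3 := h1.le_slope_of_hasDerivAt (Set.mem_univ 0) (Set.mem_univ 1) one_pos h2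
  simp only [slope_def_field, Function.comp_apply, AffineMap.lineMap_apply_zero,
    AffineMap.lineMap_apply_one, sub_zero, div_one] at h3
  rw [real_inner_comm, ← neg_sub x y, inner_neg_left] at h3
  linarith

theorem proj_inner_aux {d : ℕ} (K : Set (EuclideanSpace ℝ (Fin d))) (hK : Convex ℝ K)
    (proj : EuclideanSpace ℝ (Fin d) → EuclideanSpace ℝ (Fin d))
    (hm : ∀ z, proj z ∈ K)
    (hmin : ∀ z, ∀ v ∈ K, dist (proj z) z ≤ dist v z) (z v : EuclideanSpace ℝ (Fin d))
    (hv : v ∈ K) : inner ℝ (z - proj z) (v - proj z) ≤ 0 := by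
  refine (norm_eq_iInf_iff_real_inner_le_zero hK (hm z)).1 ?_ v hv
  have : Nonempty K := ⟨⟨_, hm z⟩⟩
  apply le_antisymm
  · refine le_ciInf fun u => ?_
    rw [← dist_eq_norm, ← dist_eq_norm, dist_comm, dist_comm z]
    exact hmin z u u.2
  · exact ciInf_le (f := fun w : K => ‖z - w‖)
      ⟨0, by rintro _ ⟨_, rfl⟩; exact norm_nonneg _⟩ ⟨_, hm z⟩

theorem proj_cont_aux {d : ℕ} (K : Set (EuclideanSpace ℝ (Fin d))) (hK : Convex ℝ K)
    (proj : EuclideanSpace ℝ (Fin d) → EuclideanSpace ℝ (Fin d))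
    (hm : ∀ z, proj z ∈ K)
    (hmin : ∀ z, ∀ v ∈ K, dist (proj z) z ≤ dist v z) : Continuous proj := by
  have : LipschitzWith 1 proj := by
    refine LipschitzWith.of_dist_le_mul fun a b => ?_
    rw [NNReal.coe_one, one_mul, dist_eq_norm, dist_eq_norm]
    have h1 := proj_inner_aux K hK proj hm hmin a (proj b) (hm b)
    have h2 := proj_inner_aux K hK proj hm hmin b (proj a) (hm a)
    have h3 : ‖proj a - proj b‖ * ‖proj a - proj b‖ ≤ ‖a - b‖ * ‖proj a - proj b‖ := by
      refine le_trans ?_ (real_inner_le_norm (a - b) (proj a - proj b))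
      rw [← real_inner_self_eq_norm_mul_norm]
      simp only [inner_sub_left, inner_sub_right] at *
      linarith
    by_contra! hlt
    nlinarith [norm_nonneg (a - b)]
  exact this.continuous

theorem proj_step_aux {d : ℕ} (K : Set (EuclideanSpace ℝ (Fin d))) (hK : Convex ℝ K)
    (proj : EuclideanSpace ℝ (Fin d) → EuclideanSpace ℝ (Fin d))
    (hm : ∀ z, proj z ∈ K)
    (hmin : ∀ z, ∀ v ∈ K, dist (proj z) z ≤ dist v z) (x g v : EuclideanSpace ℝ (Fin d))
    (hv : v ∈ K) (η G : ℝ) (hg : ‖g‖ ≤ G) :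
    2 * η * inner ℝ (x - v) g ≤ ‖x - v‖ ^ 2 - ‖proj (x - η • g) - v‖ ^ 2 + η ^ 2 * G ^ 2 := by
  have h1 := proj_inner_aux K hK proj hm hmin (x - η • g) v hv
  set z := x - η • g with hz
  have h2 : ‖z - v‖ ^ 2 = ‖z - proj z‖ ^ 2 - 2 * inner ℝ (z - proj z) (v - proj z)
      + ‖v - proj z‖ ^ 2 := by
    rw [← norm_sub_sq_real]; congr 2; abel
  have h3 : ‖z - v‖ ^ 2 = ‖x - v‖ ^ 2 - 2 * (η * inner ℝ (x - v) g) + η ^ 2 * ‖g‖ ^ 2 := by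
    have : z - v = (x - v) - η • g := by rw [hz]; abel
    rw [this, norm_sub_sq_real, inner_smul_right, norm_smul, mul_pow, Real.norm_eq_abs, sq_abs]
  have h4 : η ^ 2 * ‖g‖ ^ 2 ≤ η ^ 2 * G ^ 2 := by gcongr
  rw [norm_sub_rev (proj z) v]
  nlinarith [sq_nonneg ‖z - proj z‖]

theorem pull_aux {d : ℕ} {Ω : Type} {m mΩ : MeasurableSpace Ω} (μ : Measure Ω)
    [IsProbabilityMeasure μ] (hm : m ≤ mΩ) (u g q : Ω → EuclideanSpace ℝ (Fin d))
    (hu : StronglyMeasurable[m] u) (hg : Integrable g μ) (c : ℝ) (hc : ∀ᵐ ω ∂μ, ‖u ω‖ ≤ c)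
    (h : μ[g | m] =ᵐ[μ] q) :
    Integrable (fun ω => (inner ℝ (u ω) (q ω) : ℝ)) μ ∧
      ∫ ω, (inner ℝ (u ω) (g ω) : ℝ) ∂μ = ∫ ω, (inner ℝ (u ω) (q ω) : ℝ) ∂μ := by
  have hpull := condExp_stronglyMeasurable_bilin_of_bound
    (innerSL ℝ : EuclideanSpace ℝ (Fin d) →L[ℝ] _) hm hu hg c hc
  have hpull2 : μ[fun ω => (inner ℝ (u ω) (g ω) : ℝ) | m] =ᵐ[μ]
      fun ω => (inner ℝ (u ω) (q ω) : ℝ) := by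
    filter_upwards [hpull, h] with ω h1 h2
    rw [← h2]
    exact h1
  refine ⟨integrable_condExp.congr hpull2, ?_⟩
  rw [← integral_condExp hm]
  exact integral_congr_ae hpull2

theorem integral_const_mul_aux {Ω : Type} [MeasurableSpace Ω] (μ : Measure Ω)
    [IsProbabilityMeasure μ] (c : ℝ) : ∫ _, c ∂μ = c := by simp

/-- Projected online gradient descent with unbiased bounded
stochastic gradients. If `‖g t‖ ≤ G` a.s., `𝔼[g t | g 1, …, g (t-1)] = ∇ (f t) (w t)`
a.s., and `w (t+1) = proj (w t − η • g t)` with `η = 2W/(G√T)`, then for every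
`w* ∈ 𝕎`, `𝔼[Σ_{t=1}^T f t (w t)] − Σ_{t=1}^T f t w* ≤ 2 W G √T`. -/
theorem projected_ogd_stochastic_gradients
    (d T : ℕ) (hd : 1 ≤ d) (hT : 1 ≤ T)
    (𝕎 : Set (EuclideanSpace ℝ (Fin d)))
    (h𝕎ne : 𝕎.Nonempty) (h𝕎cpt : IsCompact 𝕎) (h𝕎cvx : Convex ℝ 𝕎)
    (W : ℝ) (hW : 0 < W) (h𝕎bdd : ∀ w ∈ 𝕎, ‖w‖ ≤ W)
    (f : ℕ → EuclideanSpace ℝ (Fin d) → ℝ)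
    (hconv : ∀ t, ConvexOn ℝ Set.univ (f t))
    (hdiff : ∀ t, Differentiable ℝ (f t))
    (G : ℝ) (hG : 0 < G)
    -- Euclidean projection onto 𝕎 (the unique closest point in 𝕎)
    (proj : EuclideanSpace ℝ (Fin d) → EuclideanSpace ℝ (Fin d))
    (hproj_mem : ∀ z, proj z ∈ 𝕎)
    (hproj_min : ∀ z, ∀ v ∈ 𝕎, dist (proj z) z ≤ dist v z)
    -- probability space and stochastic gradients
    {Ω : Type} [MeasurableSpace Ω] (μ : Measure Ω) [IsProbabilityMeasure μ]
    (g : ℕ → Ω → EuclideanSpace ℝ (Fin d))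
    (hgmeas : ∀ t, Measurable (g t))
    (hgbdd : ∀ t, ∀ᵐ ω ∂μ, ‖g t ω‖ ≤ G)
    -- step size and the iterates (each `w t` is a measurable function of
    -- `g 1, …, g (t-1)` via this recursion)
    (η : ℝ) (hη : η = 2 * W / (G * Real.sqrt T))
    (w : ℕ → Ω → EuclideanSpace ℝ (Fin d)) (w₁ : EuclideanSpace ℝ (Fin d))
    (hw1mem : w₁ ∈ 𝕎) (hwinit : w 1 = fun _ => w₁)
    (hwrec : ∀ t, w (t + 1) = fun ω => proj (w t ω - η • g t ω))
    -- unbiasedness: the conditional expectation of `g t` given the σ-algebra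
    -- generated by `g 1, …, g (t-1)` is the true gradient `∇ (f t) (w t)`
    (hgunbiased : ∀ t,
      μ[g t | MeasurableSpace.comap
          (fun ω => fun s : Fin (t - 1) => g ((s : ℕ) + 1) ω) inferInstance]
        =ᵐ[μ] fun ω => gradient (f t) (w t ω))
    -- comparator
    (wstar : EuclideanSpace ℝ (Fin d)) (hwstar : wstar ∈ 𝕎) :
    (∫ ω, ∑ t ∈ Finset.Icc 1 T, f t (w t ω) ∂μ) - ∑ t ∈ Finset.Icc 1 T, f t wstar
      ≤ 2 * W * G * Real.sqrt T := by
  have hproj_cont := proj_cont_aux 𝕎 h𝕎cvx proj hproj_mem hproj_min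
  have hwmem : ∀ t, 1 ≤ t → ∀ ω, w t ω ∈ 𝕎 := by
    intro t ht ω
    obtain ⟨n, rfl⟩ := Nat.exists_eq_add_of_le' ht
    cases n with
    | zero => simpa [hwinit] using hw1mem
    | succ n => rw [hwrec]; exact hproj_mem _
  have hwmeas : ∀ (m : MeasurableSpace Ω) (n : ℕ),
      (∀ s, s < n → Measurable[m] (g (s + 1))) → Measurable[m] (w (n + 1)) := by
    intro m n
    induction n with
    | zero => intro _; rw [zero_add, hwinit]; exact measurable_const
    | succ n ih =>
      intro h
      rw [hwrec]
      have h1 := ih fun s hs => h s (by omega)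
      have h2 := h n (by omega)
      exact hproj_cont.measurable.comp (h1.sub (h2.const_smul η))
  have hwm : ∀ t, 1 ≤ t → Measurable (w t) := by
    intro t ht
    obtain ⟨n, rfl⟩ := Nat.exists_eq_add_of_le' ht
    exact hwmeas _ n fun s _ => hgmeas _
  have hbd : ∀ t, 1 ≤ t → ∀ ω, ‖w t ω - wstar‖ ≤ 2 * W := by
    intro t ht ω
    have := norm_sub_le (w t ω) wstar
    linarith [h𝕎bdd _ (hwmem t ht ω), h𝕎bdd _ hwstar]
  have hfint : ∀ t, 1 ≤ t → Integrable (fun ω => f t (w t ω)) μ := by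
    intro t ht
    obtain ⟨C, hC⟩ := h𝕎cpt.exists_bound_of_continuousOn (hdiff t).continuous.continuousOn
    exact Integrable.of_bound
      ((hdiff t).continuous.measurable.comp (hwm t ht)).aestronglyMeasurable C
      (ae_of_all _ fun ω => hC _ (hwmem t ht ω))
  have hgint : ∀ t, Integrable (g t) μ := fun t =>
    Integrable.of_bound (hgmeas t).aestronglyMeasurable G (hgbdd t)
  have hdm : ∀ t, 1 ≤ t → Measurable fun ω => w t ω - wstar := fun t ht =>
    (hwm t ht).sub_const _
  have hiint : ∀ t, 1 ≤ t → Integrable (fun ω => inner ℝ (w t ω - wstar) (g t ω)) μ :=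
    fun t ht => (innerSL ℝ).integrable_of_bilin_of_bdd_left (2 * W)
      (hdm t ht).aestronglyMeasurable (ae_of_all _ (hbd t ht)) (hgint t)
  have hsqint : ∀ t, 1 ≤ t → Integrable (fun ω => ‖w t ω - wstar‖ ^ 2) μ := by
    intro t ht
    refine Integrable.of_bound ((hdm t ht).norm.pow_const 2).aestronglyMeasurable ((2 * W) ^ 2)
      (ae_of_all _ fun ω => ?_)
    rw [norm_pow, norm_norm]
    exact pow_le_pow_left₀ (norm_nonneg _) (hbd t ht ω) 2
  have hkey : ∀ t, 1 ≤ t → (∫ ω, f t (w t ω) ∂μ) - f t wstar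
      ≤ ∫ ω, inner ℝ (w t ω - wstar) (g t ω) ∂μ := by
    intro t ht
    have hle : MeasurableSpace.comap
          (fun ω => fun s : Fin (t - 1) => g ((s : ℕ) + 1) ω) inferInstance ≤
          (inferInstance : MeasurableSpace Ω) :=
      Measurable.comap_le (measurable_pi_lambda _ fun s => hgmeas _)
    have hwt : Measurable[MeasurableSpace.comap
          (fun ω => fun s : Fin (t - 1) => g ((s : ℕ) + 1) ω) inferInstance] (w t) := by
      obtain ⟨n, rfl⟩ := Nat.exists_eq_add_of_le' ht
      refine hwmeas _ n fun s hs => ?_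
      exact (measurable_pi_apply (X := fun _ => EuclideanSpace ℝ (Fin d))
        (⟨s, hs⟩ : Fin (n + 1 - 1))).comp (comap_measurable _)
    obtain ⟨hI, hE⟩ := pull_aux μ hle (fun ω => w t ω - wstar) (g t)
      (fun ω => gradient (f t) (w t ω)) (hwt.sub_const wstar).stronglyMeasurable (hgint t) (2 * W)
      (ae_of_all _ (hbd t ht)) (hgunbiased t)
    rw [hE, ← integral_const_mul_aux μ (f t wstar),
      ← integral_sub (hfint t ht) (integrable_const _)]
    exact integral_mono ((hfint t ht).sub (integrable_const _)) hI fun ω =>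
      grad_ineq_aux (f t) (hconv t) (hdiff t) _ _
  have hTpos : (0:ℝ) < Real.sqrt T := Real.sqrt_pos.2 (by exact_mod_cast hT)
  have hηpos : 0 < η := by rw [hη]; positivity
  set D : ℕ → ℝ := fun t => ∫ ω, ‖w t ω - wstar‖ ^ 2 ∂μ with hD
  have hstep : ∀ t, 1 ≤ t → 2 * η * ((∫ ω, f t (w t ω) ∂μ) - f t wstar)
      ≤ D t - D (t + 1) + η ^ 2 * G ^ 2 := by
    intro t ht
    calc 2 * η * ((∫ ω, f t (w t ω) ∂μ) - f t wstar)
        ≤ 2 * η * ∫ ω, inner ℝ (w t ω - wstar) (g t ω) ∂μ := by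
          gcongr; exact hkey t ht
      _ = ∫ ω, 2 * η * inner ℝ (w t ω - wstar) (g t ω) ∂μ := (integral_const_mul _ _).symm
      _ ≤ ∫ ω, (‖w t ω - wstar‖ ^ 2 - ‖w (t + 1) ω - wstar‖ ^ 2 + η ^ 2 * G ^ 2) ∂μ := by
          refine integral_mono_ae ((hiint t ht).const_mul _)
            (((hsqint t ht).sub (hsqint (t + 1) (by omega))).add (integrable_const _)) ?_
          filter_upwards [hgbdd t] with ω h
          rw [hwrec]
          exact proj_step_aux 𝕎 h𝕎cvx proj hproj_mem hproj_min _ _ _ hwstar η G h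
      _ = _ := by
          have h0 : Integrable (fun ω => ‖w t ω - wstar‖ ^ 2 - ‖w (t + 1) ω - wstar‖ ^ 2) μ :=
            (hsqint t ht).sub (hsqint (t + 1) (by omega))
          rw [integral_add h0 (integrable_const _),
            integral_sub (hsqint t ht) (hsqint (t + 1) (by omega)),
            integral_const_mul_aux]
  have hsum : ∀ n, 2 * η * ∑ t ∈ Finset.Icc 1 n, ((∫ ω, f t (w t ω) ∂μ) - f t wstar)
      ≤ D 1 - D (n + 1) + n * (η ^ 2 * G ^ 2) := by
    intro n
    induction n with
    | zero => simp
    | succ n ih =>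
      rw [Finset.sum_Icc_succ_top (by omega), mul_add]
      have := hstep (n + 1) (by omega)
      push_cast
      linarith
  rw [integral_finsetSum _ fun t ht => hfint t (Finset.mem_Icc.1 ht).1,
    ← Finset.sum_sub_distrib]
  have hfin := hsum T
  have hD1 : D 1 ≤ (2 * W) ^ 2 := by
    rw [← integral_const_mul_aux μ ((2 * W) ^ 2)]
    exact integral_mono (hsqint 1 le_rfl) (integrable_const _)
      fun ω => pow_le_pow_left₀ (norm_nonneg _) (hbd 1 le_rfl ω) 2
  have hDT : 0 ≤ D (T + 1) := integral_nonneg fun ω => sq_nonneg _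
  have hηG : η * (G * Real.sqrt T) = 2 * W := by rw [hη]; field_simp
  have hTsq : Real.sqrt T * Real.sqrt T = T := Real.mul_self_sqrt (Nat.cast_nonneg T)
  have h5 : (T:ℝ) * (η ^ 2 * G ^ 2) = (2 * W) ^ 2 := by
    rw [← hηG]; linear_combination (-(η ^ 2 * G ^ 2)) * hTsq
  have h6 : 2 * η * (2 * W * G * Real.sqrt T) = 2 * (2 * W) ^ 2 := by
    linear_combination (4 * W) * hηG
  have h7 : 0 < 2 * η := by linarith
  refine le_of_mul_le_mul_left ?_ h7
  linarith
end

section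
/- For the squared linear-regression loss, the spherical parameter-space gradient estimator is exactly unbiased for the true gradient: for any w, x ∈ ℝ^d, y ∈ ℝ, and δ > 0, (d/δ) · E_{u ∼ μ_S}[(⟨w + δ u, x⟩ − y)² · u] = 2 (⟨w, x⟩ − y) x = ∇_w (⟨w, x⟩ − y)². -/
open MeasureTheory Metric RealInnerProductSpace

lemma sphereUniform_map (d : ℕ) (g : EuclideanSpace ℝ (Fin d) ≃ₗᵢ[ℝ] EuclideanSpace ℝ (Fin d)) :
    MeasurePreserving g (sphereUniform d) (sphereUniform d) := by
  refine ⟨g.continuous.measurable, ?_⟩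
  ext t ht
  have hgt : MeasurableSet (g ⁻¹' t) := g.continuous.measurable ht
  rw [Measure.map_apply g.continuous.measurable ht]
  simp only [sphereUniform, Measure.smul_apply]
  rw [Measure.map_apply measurable_subtype_coe ht, Measure.map_apply measurable_subtype_coe hgt,
    Measure.toSphere_apply' _ (measurable_subtype_coe ht),
    Measure.toSphere_apply' _ (measurable_subtype_coe hgt)]
  congr 2
  symm
  rw [← g.measurePreserving.measure_preimage_emb g.toHomeomorph.measurableEmbedding]
  congr 1
  symm
  ext z
  simp only [Set.mem_smul, Set.mem_image, Set.mem_preimage, Subtype.exists, mem_sphere_iff_norm,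
    sub_zero]
  constructor
  · rintro ⟨r, hr, _, ⟨b, hb, hbt, rfl⟩, rfl⟩
    exact ⟨r, hr, g b, ⟨g b, by simpa using hb, hbt, rfl⟩, by simp⟩
  · rintro ⟨r, hr, _, ⟨b, hb, hbt, rfl⟩, h⟩
    refine ⟨r, hr, g.symm b, ⟨g.symm b, by simpa using hb, by simpa using hbt, rfl⟩, ?_⟩
    apply g.injective
    simpa using h

lemma sphereUniform_prob (d : ℕ) (hd : 1 ≤ d) : IsProbabilityMeasure (sphereUniform d) := by
  have : Nonempty (Fin d) := ⟨⟨0, hd⟩⟩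
  constructor
  simp only [sphereUniform, Measure.smul_apply]
  rw [Measure.map_apply measurable_subtype_coe MeasurableSet.univ, Set.preimage_univ, smul_eq_mul]
  apply ENNReal.inv_mul_cancel
  · rw [Ne, Measure.measure_univ_eq_zero]
    exact Measure.toSphere_ne_zero _
  · exact measure_ne_top _ _

lemma sphereUniform_norm (d : ℕ) : ∀ᵐ u ∂(sphereUniform d), ‖u‖ = 1 := by
  unfold sphereUniform
  apply Measure.ae_smul_measure
  rw [ae_map_iff measurable_subtype_coe.aemeasurable (measurableSet_eq_fun (by fun_prop) (by fun_prop))]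
  exact Filter.Eventually.of_forall fun u => by simpa using u.2

lemma sphereUniform_integrable (d : ℕ) (hd : 1 ≤ d) {F : Type*} [NormedAddCommGroup F]
    (f : EuclideanSpace ℝ (Fin d) → F) (hf : Continuous f) :
    Integrable f (sphereUniform d) := by
  have := sphereUniform_prob d hd
  obtain ⟨C, hC⟩ := (isCompact_sphere (0 : EuclideanSpace ℝ (Fin d)) 1).exists_bound_of_continuousOn
    hf.continuousOn
  refine Integrable.of_bound hf.aestronglyMeasurable C ?_
  filter_upwards [sphereUniform_norm d] with u hu
  exact hC u (by simpa using hu)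

lemma sphereUniform_comp (d : ℕ) (g : EuclideanSpace ℝ (Fin d) ≃ₗᵢ[ℝ] EuclideanSpace ℝ (Fin d))
    {F : Type*} [NormedAddCommGroup F] [NormedSpace ℝ F] (f : EuclideanSpace ℝ (Fin d) → F) :
    ∫ u, f (g u) ∂(sphereUniform d) = ∫ u, f u ∂(sphereUniform d) :=
  (sphereUniform_map d g).integral_comp g.toHomeomorph.measurableEmbedding f

lemma sphereUniform_odd (d : ℕ)
    {F : Type*} [NormedAddCommGroup F] [NormedSpace ℝ F] (f : EuclideanSpace ℝ (Fin d) → F)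
    (hf : ∀ u, f (-u) = - f u) :
    ∫ u, f u ∂(sphereUniform d) = 0 := by
  have h := sphereUniform_comp d (LinearIsometryEquiv.neg ℝ) f
  simp only [LinearIsometryEquiv.coe_neg, hf, integral_neg] at h
  have h2 : (2 : ℝ) • ∫ u, f u ∂(sphereUniform d) = 0 := by
    rw [two_smul]; nth_rewrite 1 [← h]; simp
  simpa using h2

lemma sphereUniform_offdiag (d : ℕ) (i j : Fin d) (hij : j ≠ i) :
    ∫ u, u j * u i ∂(sphereUniform d) = 0 := by
  have h := sphereUniform_comp d (LinearIsometryEquiv.piLpCongrRight 2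
    (fun k : Fin d => if k = i then LinearIsometryEquiv.neg ℝ else LinearIsometryEquiv.refl ℝ ℝ))
    (fun u => u j * u i)
  simp [hij, integral_neg] at h
  linarith

lemma sphereUniform_diag (d : ℕ) (hd : 1 ≤ d) (i : Fin d) :
    ∫ u, u i * u i ∂(sphereUniform d) = 1 / d := by
  have hp := sphereUniform_prob d hd
  have h (j : Fin d) : ∫ u, u j * u j ∂(sphereUniform d) = ∫ u, u i * u i ∂(sphereUniform d) := by
    have h := sphereUniform_comp d (LinearIsometryEquiv.piLpCongrLeft 2 ℝ ℝ (Equiv.swap i j))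
      (fun u => u i * u i)
    simpa [LinearIsometryEquiv.piLpCongrLeft_apply, Equiv.piCongrLeft'] using h
  have hs : ∑ j : Fin d, ∫ u, u j * u j ∂(sphereUniform d) = 1 := by
    rw [← integral_finsetSum _ (fun j _ => sphereUniform_integrable d hd _ (by fun_prop))]
    rw [integral_congr_ae (g := fun _ => (1 : ℝ))]
    · simp
    · filter_upwards [sphereUniform_norm d] with u hu
      have := EuclideanSpace.real_norm_sq_eq u
      rw [hu] at this
      simp only [← sq]
      linarith
  simp only [h] at hs
  simp at hs
  have : (d : ℝ) ≠ 0 := by positivity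
  rw [eq_div_iff this, mul_comm]
  exact hs

lemma sphereUniform_second (d : ℕ) (hd : 1 ≤ d) (x : EuclideanSpace ℝ (Fin d)) :
    ∫ u, ⟪u, x⟫ • u ∂(sphereUniform d) = (1 / d : ℝ) • x := by
  ext i
  have hI := sphereUniform_integrable d hd (fun u => ⟪u, x⟫ • u) (by fun_prop)
  have h := (EuclideanSpace.proj (𝕜 := ℝ) i).integral_comp_comm hI
  refine h.symm.trans ?_
  change ∫ u, (⟪u, x⟫ • u) i ∂(sphereUniform d) = _
  have e : ∀ u : EuclideanSpace ℝ (Fin d), (⟪u, x⟫ • u) i = ∑ j, x j * (u j * u i) := by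
    intro u
    simp [PiLp.inner_apply, Finset.sum_mul, mul_assoc]
  simp only [e]
  rw [integral_finsetSum _ (fun j _ => sphereUniform_integrable d hd _ (by fun_prop))]
  simp only [integral_const_mul]
  rw [Finset.sum_eq_single i (fun j _ hj => by rw [sphereUniform_offdiag d i j hj, mul_zero])
    (by simp), sphereUniform_diag d hd]
  simp [mul_comm]

/-- Exact unbiasedness of the spherical parameter-space estimator
for the squared loss. For any `w, x, y, δ > 0`,
`(d/δ) • 𝔼_{u ∼ sphere} [(⟪w + δu, x⟫ − y)² • u] = 2(⟪w, x⟫ − y) • x`, which is the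
gradient of `w ↦ (⟪w, x⟫ − y)²`. -/
theorem spherical_estimator_unbiased_for_squared_loss
    (d : ℕ) (hd : 1 ≤ d)
    (w x : EuclideanSpace ℝ (Fin d)) (y δ : ℝ) (hδ : 0 < δ) :
    (((d : ℝ) / δ) •
        ∫ u, ((⟪w + δ • u, x⟫ - y) ^ 2) • u ∂(sphereUniform d)
      = (2 * (⟪w, x⟫ - y)) • x) ∧
    HasGradientAt (fun v : EuclideanSpace ℝ (Fin d) => (⟪v, x⟫ - y) ^ 2)
      ((2 * (⟪w, x⟫ - y)) • x) w := by
  constructor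
  · have e : ∀ u : EuclideanSpace ℝ (Fin d), ((⟪w + δ • u, x⟫ - y) ^ 2) • u =
        (((⟪w, x⟫ - y) ^ 2 + δ ^ 2 * ⟪u, x⟫ ^ 2) • u) + (2 * (⟪w, x⟫ - y) * δ) • (⟪u, x⟫ • u) := by
      intro u
      rw [inner_add_left, real_inner_smul_left, smul_smul, ← add_smul]
      congr 1
      ring
    simp only [e]
    rw [integral_add (sphereUniform_integrable d hd _ (by fun_prop))
      (sphereUniform_integrable d hd _ (by fun_prop)), sphereUniform_odd d _ (by simp),
      integral_smul, sphereUniform_second d hd, zero_add, smul_smul, smul_smul]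
    congr 1
    have : (d : ℝ) ≠ 0 := by positivity
    field_simp
  · rw [hasGradientAt_iff_hasFDerivAt]
    have h := (((hasFDerivAt_id (𝕜 := ℝ) w).inner ℝ (hasFDerivAt_const x w)).sub_const y).pow 2
    refine h.congr_fderiv ?_
    ext v
    simp [real_inner_comm, inner_smul_left]
end
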